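/- Let p ≥ 5 be a prime. Then the Dedekind–Rademacher sum s(10p² − p, 12p − 1; (24p−3)/(24p−2), −1/2) equals 43/118 if p = 5, and equals (p² + 12p − 181)/(12(12p − 1)) if p ≥ 7. -/

import Mathlib

open Real
open scoped Classical

/-- The generalized sawtooth function `((x))`. -/
noncomputable def saw (x : ℝ) : ℝ :=
  if ∃ m : ℤ, x = m then 0 else Int.fract x - 1 / 2

/-- The Dedekind–Rademacher sum
`s(b,a;x,y) = ∑_{k=0}^{|a|−1} ((x + (b/a)(k+y))) (((k+y)/a))`. -/
noncomputable def dedekindRademacher (b a : ℤ) (x y : ℝ) : ℝ :=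
  ∑ k ∈ Finset.range a.natAbs,
    saw (x + (b : ℝ) / (a : ℝ) * ((k : ℝ) + y)) * saw (((k : ℝ) + y) / (a : ℝ))

/-!
Modulo `a = 12 p - 1` the inverse of `10 p ^ 2 - p` is `-72`. Substituting the numerator of the
first sawtooth argument as a new summation variable `m` therefore turns the sum into
`∑ m < a, ((m / a)) ((1 / 2 - 72 (m + 1 / 2) / a))`, and the second sawtooth here is the rounding
error of `72 (m + 1 / 2) / a`. When `n + a` is odd no tie occurs in rounding, and the rounding
functions of slopes `n / a` and `a / n` count the same lattice points `(m + 1 / 2, t + 1 / 2)` from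
the two axes. This reciprocity replaces the sum of length `a` by one of length `72`, in which the
rounded values depend on `p` linearly along each residue class modulo `12`.
-/

theorem saw_add_intCast (x : ℝ) (n : ℤ) : saw (x + n) = saw x := by
  have exists_iff : (∃ m : ℤ, x + n = m) ↔ ∃ m : ℤ, x = m :=
    ⟨fun ⟨m, hm⟩ ↦ ⟨m - n, by push_cast; linarith⟩, fun ⟨m, hm⟩ ↦ ⟨m + n, by push_cast; linarith⟩⟩
  simp only [saw, exists_iff, Int.fract_add_intCast]

theorem saw_zero : saw 0 = 0 :=
  if_pos ⟨0, Int.cast_zero.symm⟩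

theorem saw_eq_sub_half {x : ℝ} (h0 : 0 < x) (h1 : x < 1) : saw x = x - 1 / 2 := by
  have not_int : ¬∃ m : ℤ, x = m := by
    rintro ⟨m, rfl⟩
    norm_cast at h0 h1
    lia
  rw [saw, if_neg not_int, Int.fract_eq_self.2 ⟨h0.le, h1⟩]

theorem saw_half_sub {w : ℝ} {N : ℤ} (h : |w - N| < 1 / 2) : saw (1 / 2 - w) = N - w := by
  obtain ⟨hl, hr⟩ := abs_lt.1 h
  rw [← saw_add_intCast _ N, saw_eq_sub_half (by linarith) (by linarith)]
  ring

theorem saw_natCast_div {a m : ℕ} (hm : m < a) :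
    saw ((m : ℝ) / a) = (m : ℝ) / a - 1 / 2 + if m = 0 then 1 / 2 else 0 := by
  rcases m.eq_zero_or_pos with rfl | hpos
  · simp [saw_zero]
  · have ha : (0 : ℝ) < a := by exact_mod_cast hpos.trans hm
    have hlt : (m : ℝ) / a < 1 := by rw [div_lt_one ha]; exact_mod_cast hm
    rw [if_neg hpos.ne', add_zero, saw_eq_sub_half (by positivity) hlt]

theorem sum_range_natCast_zmod {M : Type*} [AddCommMonoid M] (a : ℕ) [NeZero a] (f : ZMod a → M) :
    ∑ k ∈ Finset.range a, f k = ∑ z, f z :=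
  Finset.sum_nbij' (fun k ↦ (k : ZMod a)) ZMod.val (by simp) (by simp [ZMod.val_lt])
    (fun k hk ↦ ZMod.val_cast_of_lt (Finset.mem_range.1 hk)) (by simp) (by simp)

theorem sum_range_periodic_comp_affine {M : Type*} [AddCommMonoid M] {a : ℕ} [NeZero a]
    {F : ℤ → M} (hF : Function.Periodic F a) {b : ℤ} (hb : IsCoprime b a) (z : ℤ) :
    ∑ k ∈ Finset.range a, F (b * k + z) = ∑ k ∈ Finset.range a, F k := by
  have F_eq_cast (k : ℤ) : F k = F (k : ZMod a).cast := by
    rw [ZMod.coe_intCast, Int.emod_def, mul_comm]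
    exact (hF.sub_int_mul_eq (k / a)).symm
  let affine : ZMod a ≃ ZMod a :=
    (ZMod.unitOfIsCoprime b hb).mulLeft.trans (Equiv.addRight (z : ZMod a))
  calc ∑ k ∈ Finset.range a, F (b * k + z)
      = ∑ k ∈ Finset.range a, F (affine k).cast :=
        Finset.sum_congr rfl fun k _ ↦ by rw [F_eq_cast]; simp [affine]
    _ = ∑ w : ZMod a, F (affine w).cast := sum_range_natCast_zmod a fun w ↦ F (affine w).cast
    _ = ∑ w : ZMod a, F w.cast := affine.sum_comp fun w ↦ F w.cast
    _ = ∑ k ∈ Finset.range a, F k := by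
        rw [← sum_range_natCast_zmod a fun w ↦ F w.cast]
        exact Finset.sum_congr rfl fun k _ ↦ by rw [F_eq_cast k, Int.cast_natCast]

theorem dedekindRademacher_add_intCast (b a : ℤ) (x y : ℝ) (n : ℤ) :
    dedekindRademacher b a (x + n) y = dedekindRademacher b a x y := by
  simp only [dedekindRademacher, add_right_comm x (n : ℝ), saw_add_intCast]

theorem dedekindRademacher_eq_of_mul_modEq_one {a b u z : ℤ} {x y : ℝ} (ha : a ≠ 0)
    (hub : u * b ≡ 1 [ZMOD a]) (hz : a * x + b * y = z) :
    dedekindRademacher b a x y = dedekindRademacher u a ((y - u * z) / a) 0 := by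
  have haR : (a : ℝ) ≠ 0 := by exact_mod_cast ha
  have : NeZero a.natAbs := ⟨Int.natAbs_ne_zero.2 ha⟩
  obtain ⟨c, hc⟩ := hub.symm.dvd
  have hcR : (u : ℝ) * b = 1 + a * c := by exact_mod_cast eq_add_of_sub_eq' hc
  let G (m : ℤ) : ℝ := saw ((y - u * z) / a + u / a * m) * saw (m / a)
  have G_periodic : Function.Periodic G a.natAbs := by
    have periodic_a : Function.Periodic G a := fun m ↦ by
      simp only [G, ← saw_add_intCast ((y - u * z) / a + u / a * m) u,
        ← saw_add_intCast ((m : ℝ) / a) 1]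
      congr 2 <;> push_cast <;> field_simp
      ring
    rw [← Int.sign_mul_self_eq_natAbs]
    exact periodic_a.int_mul a.sign
  have coprime : IsCoprime b a.natAbs := by
    rw [Int.natCast_natAbs, IsCoprime.abs_right_iff]
    exact ⟨u, -c, by linear_combination hc⟩
  have G_affine (k : ℕ) : G (b * k + z) = saw (x + b / a * (k + y)) * saw ((k + y) / a) := by
    rw [← saw_add_intCast ((k + y) / a) (c * k), mul_comm (saw (x + _))]
    simp only [G]
    congr 2 <;> push_cast <;> field_simp
    · linear_combination k * hcR
    · linear_combination -hz
  calc dedekindRademacher b a x y = ∑ k ∈ Finset.range a.natAbs, G (b * k + z) := by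
        simp only [dedekindRademacher, G_affine]
    _ = ∑ k ∈ Finset.range a.natAbs, G k := sum_range_periodic_comp_affine G_periodic coprime z
    _ = dedekindRademacher u a ((y - u * z) / a) 0 := by simp [dedekindRademacher, G]

/-- The integer nearest to `(n / a) (m + 1 / 2)`, the `m`-th midpoint rescaled from `a` to `n`.
Halves are rounded up; truncated division is used so that concrete values are decidable. -/
def roundMidpoint (n a m : ℕ) : ℕ :=
  (n * (2 * m + 1) + a) / (2 * a)

theorem lt_roundMidpoint_iff {n a m t : ℕ} (ha : 0 < a) :
    t < roundMidpoint n a m ↔ a * (2 * t + 1) ≤ n * (2 * m + 1) := by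
  rw [roundMidpoint, ← Nat.succ_le_iff, Nat.le_div_iff_mul_le (by positivity)]
  constructor <;> intro h <;> linarith

theorem roundMidpoint_le {n a m : ℕ} (hm : m < a) : roundMidpoint n a m ≤ n := by
  refine not_lt.1 fun hlt ↦ ?_
  have key : a * (2 * n + 1) ≤ n * (2 * m + 1) := (lt_roundMidpoint_iff (by lia)).1 hlt
  have : n * (2 * m + 1) ≤ n * (2 * a) := Nat.mul_le_mul_left n (by lia)
  linarith

theorem mul_odd_ne_mul_odd {n a : ℕ} (h : Odd (n + a)) (m t : ℕ) :
    a * (2 * t + 1) ≠ n * (2 * m + 1) := by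
  intro heq
  have same_parity : Even a ↔ Even n := by
    simpa [Nat.even_mul, Nat.even_add] using congrArg Even heq
  exact Nat.not_even_iff_odd.2 h (Nat.even_add.2 same_parity.symm)

theorem roundMidpoint_le_iff_lt_roundMidpoint {n a : ℕ} (ha : 0 < a) (hn : 0 < n)
    (hodd : Odd (n + a)) (m t : ℕ) :
    roundMidpoint a n t ≤ m ↔ t < roundMidpoint n a m := by
  rw [← not_lt, lt_roundMidpoint_iff hn, lt_roundMidpoint_iff ha, not_le]
  exact ⟨le_of_lt, fun h ↦ h.lt_of_ne (mul_odd_ne_mul_odd hodd m t)⟩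

theorem abs_sub_roundMidpoint_lt {n a : ℕ} (ha : 0 < a) (hodd : Odd (n + a)) (m : ℕ) :
    |(n * (2 * m + 1) / (2 * a) : ℝ) - roundMidpoint n a m| < 1 / 2 := by
  have haR : (0 : ℝ) < a := by exact_mod_cast ha
  have upper : (n * (2 * m + 1) : ℝ) < a * (2 * roundMidpoint n a m + 1) := by
    exact_mod_cast not_le.1 (mt (lt_roundMidpoint_iff ha).2 (lt_irrefl _))
  have lower : (a * (2 * roundMidpoint n a m - 1) : ℝ) < n * (2 * m + 1) := by
    rcases hR : roundMidpoint n a m with _ | t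
    · have : (0 : ℝ) ≤ n * (2 * m + 1) := by positivity
      push_cast
      linarith
    · have hle : a * (2 * t + 1) ≤ n * (2 * m + 1) := (lt_roundMidpoint_iff ha).1 (by lia)
      have hlt : (a * (2 * t + 1) : ℝ) < n * (2 * m + 1) := by
        exact_mod_cast hle.lt_of_ne (mul_odd_ne_mul_odd hodd m t)
      push_cast
      linarith
  rw [abs_sub_lt_iff, sub_lt_iff_lt_add, sub_lt_comm, div_lt_iff₀ (by positivity),
    lt_div_iff₀ (by positivity)]
  constructor <;> linarith

theorem roundMidpoint_add_reflect {n a t : ℕ} (hodd : Odd (n + a)) (ht : t < n) :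
    roundMidpoint a n t + roundMidpoint a n (n - 1 - t) = a := by
  have hn : 0 < n := by lia
  have hnR : (n : ℝ) ≠ 0 := by exact_mod_cast hn.ne'
  have midpoints_add : (a * (2 * t + 1) / (2 * n) : ℝ) +
      a * (2 * (n - 1 - t : ℕ) + 1) / (2 * n) = a := by
    rw [Nat.sub_sub, Nat.cast_sub (by lia)]
    push_cast
    field_simp
    ring
  obtain ⟨h₁, h₂⟩ := abs_lt.1 (abs_sub_roundMidpoint_lt hn (add_comm n a ▸ hodd) t)
  obtain ⟨h₃, h₄⟩ := abs_lt.1 (abs_sub_roundMidpoint_lt hn (add_comm n a ▸ hodd) (n - 1 - t))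
  have upper : (roundMidpoint a n t + roundMidpoint a n (n - 1 - t) : ℝ) < a + 1 := by linarith
  have lower : (a : ℝ) < roundMidpoint a n t + roundMidpoint a n (n - 1 - t) + 1 := by linarith
  norm_cast at upper lower
  lia

theorem two_mul_sum_roundMidpoint {n a : ℕ} (hodd : Odd (n + a)) :
    2 * ∑ t ∈ Finset.range n, roundMidpoint a n t = n * a := by
  calc 2 * ∑ t ∈ Finset.range n, roundMidpoint a n t
      = ∑ t ∈ Finset.range n, (roundMidpoint a n t + roundMidpoint a n (n - 1 - t)) := by
        rw [Finset.sum_add_distrib, Finset.sum_range_reflect, two_mul]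
    _ = ∑ _t ∈ Finset.range n, a :=
        Finset.sum_congr rfl fun t ht ↦ roundMidpoint_add_reflect hodd (Finset.mem_range.1 ht)
    _ = n * a := by simp

theorem roundMidpoint_two_mul_mul_add {n : ℕ} (hn : 0 < n) (q s t : ℕ) :
    roundMidpoint (2 * n * q + s) n t = q * (2 * t + 1) + roundMidpoint s n t := by
  rw [roundMidpoint, roundMidpoint, ← Nat.mul_add_div (by positivity)]
  congr 1
  ring

theorem sum_range_roundMidpoint_nsmul {M : Type*} [AddCommMonoid M] {n a : ℕ}
    (hodd : Odd (n + a)) (f : ℕ → M) :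
    ∑ m ∈ Finset.range a, roundMidpoint n a m • f m =
      ∑ t ∈ Finset.range n, ∑ m ∈ Finset.Ico (roundMidpoint a n t) a, f m := by
  have mem_iff (m t : ℕ) : m ∈ Finset.range a ∧ t ∈ Finset.range (roundMidpoint n a m) ↔
      m ∈ Finset.Ico (roundMidpoint a n t) a ∧ t ∈ Finset.range n := by
    simp only [Finset.mem_range, Finset.mem_Ico]
    constructor
    · rintro ⟨hm, ht⟩
      have htn : t < n := ht.trans_le (roundMidpoint_le hm)
      exact ⟨⟨(roundMidpoint_le_iff_lt_roundMidpoint (by lia) (by lia) hodd m t).2 ht, hm⟩, htn⟩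
    · rintro ⟨⟨ht, hm⟩, htn⟩
      exact ⟨hm, (roundMidpoint_le_iff_lt_roundMidpoint (by lia) (by lia) hodd m t).1 ht⟩
  rw [← Finset.sum_comm' mem_iff]
  simp

theorem sum_range_two_mul_sub (c : ℝ) (n : ℕ) :
    ∑ m ∈ Finset.range n, (2 * (m : ℝ) - c) = n * (n - 1 - c) := by
  induction n with
  | zero => simp
  | succ n ih => rw [Finset.sum_range_succ, ih]; push_cast; ring

theorem sum_Ico_two_mul_sub {T a : ℕ} (hT : T ≤ a) :
    ∑ m ∈ Finset.Ico T a, (2 * (m : ℝ) - a) = T * (a + 1 - T) - a := by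
  rw [Finset.sum_Ico_eq_sub _ hT, sum_range_two_mul_sub, sum_range_two_mul_sub]
  ring

theorem sum_range_two_mul_sub_mul_two_mul_add_one (c : ℝ) (n : ℕ) :
    ∑ m ∈ Finset.range n, (2 * (m : ℝ) - c) * (2 * m + 1) =
      n * (4 * n ^ 2 - 3 * n - 1) / 3 - c * n ^ 2 := by
  induction n with
  | zero => simp
  | succ n ih => rw [Finset.sum_range_succ, ih]; push_cast; ring

theorem sum_range_roundMidpoint_mul_two_mul_sub {n a : ℕ} (hodd : Odd (n + a)) :
    ∑ m ∈ Finset.range a, roundMidpoint n a m * (2 * (m : ℝ) - a) =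
      ∑ t ∈ Finset.range n, (roundMidpoint a n t * (a + 1 - roundMidpoint a n t) : ℝ) - n * a := by
  calc ∑ m ∈ Finset.range a, roundMidpoint n a m * (2 * (m : ℝ) - a)
      = ∑ t ∈ Finset.range n, ∑ m ∈ Finset.Ico (roundMidpoint a n t) a, (2 * (m : ℝ) - a) := by
        simpa only [nsmul_eq_mul] using
          sum_range_roundMidpoint_nsmul hodd fun m : ℕ ↦ (2 * (m : ℝ) - a)
    _ = ∑ t ∈ Finset.range n, (roundMidpoint a n t * (a + 1 - roundMidpoint a n t) - a : ℝ) :=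
        Finset.sum_congr rfl fun t ht ↦
          sum_Ico_two_mul_sub (roundMidpoint_le (Finset.mem_range.1 ht))
    _ = _ := by simp [Finset.sum_sub_distrib]

theorem saw_half_sub_midpoint {n a : ℕ} (ha : 0 < a) (hodd : Odd (n + a)) (m : ℕ) :
    saw (1 / 2 - n * (2 * m + 1) / (2 * a)) =
      roundMidpoint n a m - n * (2 * m + 1) / (2 * a) := by
  simpa using saw_half_sub (N := roundMidpoint n a m)
    (by simpa using abs_sub_roundMidpoint_lt ha hodd m)

theorem dedekindRademacher_neg_eq_sum_roundMidpoint {n a : ℕ} (ha : 0 < a) (hodd : Odd (n + a)) :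
    dedekindRademacher (-n) a (1 / 2 - n / (2 * a)) 0 =
      (6 * ∑ t ∈ Finset.range n, (roundMidpoint a n t * (a + 1 - roundMidpoint a n t) : ℝ) -
        n * (a + 1) * (a + 2)) / (12 * a) + roundMidpoint n a 0 / 2 := by
  have haR : (a : ℝ) ≠ 0 := by exact_mod_cast ha.ne'
  have term_eq : ∀ m ∈ Finset.range a,
      saw (1 / 2 - n / (2 * a) + (-n : ℤ) / (a : ℤ) * (m + 0)) * saw ((m + 0) / (a : ℤ)) =
        1 / (2 * a) * (roundMidpoint n a m * (2 * m - a)) -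
          n / (4 * a ^ 2) * ((2 * m - a) * (2 * m + 1)) +
          if m = 0 then (roundMidpoint n a 0 - n / (2 * a) : ℝ) / 2 else 0 := by
    intro m hm
    have first_arg : (1 / 2 - n / (2 * a) + (-n : ℤ) / (a : ℤ) * (m + 0) : ℝ) =
        1 / 2 - n * (2 * m + 1) / (2 * a) := by
      push_cast
      field_simp
      ring
    rw [first_arg, saw_half_sub_midpoint ha hodd, add_zero, Int.cast_natCast,
      saw_natCast_div (Finset.mem_range.1 hm)]
    split_ifs with h
    · subst h
      push_cast
      field_simp
      ring
    · field_simp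
      ring
  rw [dedekindRademacher, Int.natAbs_natCast, Finset.sum_congr rfl term_eq,
    Finset.sum_add_distrib, Finset.sum_sub_distrib, ← Finset.mul_sum, ← Finset.mul_sum,
    sum_range_roundMidpoint_mul_two_mul_sub hodd, sum_range_two_mul_sub_mul_two_mul_add_one,
    Finset.sum_ite_eq', if_pos (Finset.mem_range.2 ha)]
  field_simp
  ring

/-- With `p = 12 q + r`, these values are forced by the requirement that
`∑ t < 72, roundMidpoint (12 p - 1) 72 t ^ 2` be the same quadratic polynomial in `p` for all four
residues `r`. -/
theorem moments_roundMidpoint_of_lt_twelve {r : ℕ} (hr : r < 12) (hcop : r.Coprime 12) :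
    ∑ t ∈ Finset.range 72, (2 * t + 1) * roundMidpoint (12 * r - 1) 72 t + 3468 = 41470 * r ∧
    6 * ∑ t ∈ Finset.range 72, roundMidpoint (12 * r - 1) 72 t ^ 2 + 3468 * r =
      20735 * r ^ 2 + 181 := by
  decide +revert

theorem six_mul_sum_sq_roundMidpoint {p : ℕ} (hp : p.Coprime 6) :
    6 * ∑ t ∈ Finset.range 72, roundMidpoint (12 * p - 1) 72 t ^ 2 + 3468 * p =
      20735 * p ^ 2 + 181 := by
  obtain ⟨q, r, hr, rfl⟩ : ∃ q r, r < 12 ∧ p = 12 * q + r :=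
    ⟨p / 12, p % 12, Nat.mod_lt p (by norm_num), (Nat.div_add_mod p 12).symm⟩
  have r_coprime : r.Coprime 12 := by
    have : (12 * q + r).Coprime 12 := hp.mul_right (hp.coprime_dvd_right (by norm_num : 2 ∣ 6))
    simpa using this
  have r_pos : 0 < r := Nat.pos_of_ne_zero fun h ↦ by simp [h] at r_coprime
  obtain ⟨first_moment, second_moment⟩ := moments_roundMidpoint_of_lt_twelve hr r_coprime
  have round_eq (t : ℕ) : roundMidpoint (12 * (12 * q + r) - 1) 72 t =
      q * (2 * t + 1) + roundMidpoint (12 * r - 1) 72 t := by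
    rw [← roundMidpoint_two_mul_mul_add (by norm_num)]
    congr 1
    lia
  have sum_sq_odd : ∑ t ∈ Finset.range 72, (2 * t + 1) ^ 2 = 497640 := by decide
  have expand : ∑ t ∈ Finset.range 72, roundMidpoint (12 * (12 * q + r) - 1) 72 t ^ 2 =
      497640 * q ^ 2 +
        2 * q * ∑ t ∈ Finset.range 72, (2 * t + 1) * roundMidpoint (12 * r - 1) 72 t +
        ∑ t ∈ Finset.range 72, roundMidpoint (12 * r - 1) 72 t ^ 2 := by
    simp only [round_eq, ← sum_sq_odd, Finset.sum_mul, Finset.mul_sum, ← Finset.sum_add_distrib]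
    exact Finset.sum_congr rfl fun t _ ↦ by ring
  rw [expand]
  linear_combination 12 * q * first_moment + second_moment

theorem six_mul_sum_roundMidpoint_mul_sub {p : ℕ} (hp : p.Coprime 6) :
    6 * ∑ t ∈ Finset.range 72, (roundMidpoint (12 * p - 1) 72 t *
      (12 * p - roundMidpoint (12 * p - 1) 72 t) : ℝ) = 10369 * p ^ 2 + 876 * p - 181 := by
  have p_pos : 0 < p := Nat.pos_of_ne_zero fun h ↦ by simp [h] at hp
  have sum_eq : 2 * ∑ t ∈ Finset.range 72, (roundMidpoint (12 * p - 1) 72 t : ℝ) =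
      72 * (12 * p - 1) := by
    have odd : Odd (72 + (12 * p - 1)) := ⟨6 * p + 35, by lia⟩
    have := congrArg (Nat.cast (R := ℝ)) (two_mul_sum_roundMidpoint odd)
    push_cast [Nat.cast_pred (show 0 < 12 * p by lia)] at this
    exact this
  have sum_sq_eq : 6 * ∑ t ∈ Finset.range 72, (roundMidpoint (12 * p - 1) 72 t : ℝ) ^ 2 +
      3468 * p = 20735 * p ^ 2 + 181 := by
    exact_mod_cast six_mul_sum_sq_roundMidpoint hp
  have expand : ∑ t ∈ Finset.range 72, (roundMidpoint (12 * p - 1) 72 t *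
      (12 * p - roundMidpoint (12 * p - 1) 72 t) : ℝ) =
      12 * p * ∑ t ∈ Finset.range 72, (roundMidpoint (12 * p - 1) 72 t : ℝ) -
        ∑ t ∈ Finset.range 72, (roundMidpoint (12 * p - 1) 72 t : ℝ) ^ 2 := by
    rw [Finset.mul_sum, ← Finset.sum_sub_distrib]
    exact Finset.sum_congr rfl fun t _ ↦ by ring
  rw [expand]
  linear_combination 36 * p * sum_eq - sum_sq_eq

theorem dedekindRademacher_eq_dedekindRademacher_neg_seventyTwo {p a : ℕ} (hp : Odd p)
    (ha : a + 1 = 12 * p) :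
    dedekindRademacher (10 * (p : ℤ) ^ 2 - p) a ((24 * (p : ℝ) - 3) / (24 * (p : ℝ) - 2)) (-1 / 2) =
      dedekindRademacher (-72) a (1 / 2 - 72 / (2 * a)) 0 := by
  obtain ⟨d, rfl⟩ := hp
  have haZ : (a : ℤ) = 24 * d + 11 := by lia
  have haR : (a : ℝ) = 24 * d + 11 := by exact_mod_cast haZ
  have a_ne_zero : (24 * d + 11 : ℝ) ≠ 0 := by positivity
  have inverse : -72 * (10 * ((2 * d + 1 : ℕ) : ℤ) ^ 2 - (2 * d + 1 : ℕ)) ≡ 1 [ZMOD a] := by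
    refine Int.modEq_iff_dvd.2 ⟨60 * (2 * d + 1) - 1, ?_⟩
    rw [haZ]
    push_cast
    ring
  rw [dedekindRademacher_eq_of_mul_modEq_one (z := -20 * d ^ 2 + 5 * d + 6) (by lia) inverse,
    ← dedekindRademacher_add_intCast _ _ (1 / 2 - _) _ (72 - 30 * (2 * d + 1))]
  · congr 1
    push_cast
    rw [haR]
    field_simp
    ring
  · have denominator_eq : (24 * (2 * d + 1) - 2 : ℝ) = 2 * (24 * d + 11) := by ring
    push_cast
    rw [haR, denominator_eq]
    field_simp
    ring

theorem dedekindRademacher_eq_add_roundMidpoint {p : ℕ} (hp : p.Coprime 6) :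
    dedekindRademacher (10 * (p : ℤ) ^ 2 - p) (12 * (p : ℤ) - 1)
        ((24 * (p : ℝ) - 3) / (24 * (p : ℝ) - 2)) (-1 / 2) =
      ((p : ℝ) ^ 2 + 12 * (p : ℝ) - 181) / (12 * (12 * (p : ℝ) - 1)) +
        roundMidpoint 72 (12 * p - 1) 0 / 2 := by
  have p_pos : 0 < p := Nat.pos_of_ne_zero fun h ↦ by simp [h] at hp
  have p_odd : Odd p := Nat.coprime_two_right.1 (hp.coprime_dvd_right (by norm_num : 2 ∣ 6))
  have castZ : ((12 * p - 1 : ℕ) : ℤ) = 12 * p - 1 := by lia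
  have castR : ((12 * p - 1 : ℕ) : ℝ) = 12 * p - 1 := by exact_mod_cast castZ
  have reciprocity := dedekindRademacher_neg_eq_sum_roundMidpoint (n := 72) (a := 12 * p - 1)
    (by lia) ⟨6 * p + 35, by lia⟩
  push_cast [castR] at reciprocity
  rw [← castZ, dedekindRademacher_eq_dedekindRademacher_neg_seventyTwo p_odd (by lia), castR,
    reciprocity, sub_add_cancel, six_mul_sum_roundMidpoint_mul_sub hp]
  congr 2
  ring

theorem stmt_13_general (p : ℕ) (hp : p.Coprime 6) :
    (p = 5 →
      dedekindRademacher (10 * (p : ℤ) ^ 2 - p) (12 * (p : ℤ) - 1)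
        ((24 * (p : ℝ) - 3) / (24 * (p : ℝ) - 2)) (-1 / 2) = 43 / 118) ∧
    (7 ≤ p →
      dedekindRademacher (10 * (p : ℤ) ^ 2 - p) (12 * (p : ℤ) - 1)
        ((24 * (p : ℝ) - 3) / (24 * (p : ℝ) - 2)) (-1 / 2) =
      ((p : ℝ) ^ 2 + 12 * (p : ℝ) - 181) / (12 * (12 * (p : ℝ) - 1))) := by
  rw [dedekindRademacher_eq_add_roundMidpoint hp]
  refine ⟨?_, fun hp7 ↦ ?_⟩
  · rintro rfl
    norm_num [roundMidpoint]
  · have round_eq_zero : roundMidpoint 72 (12 * p - 1) 0 = 0 := Nat.div_eq_of_lt (by lia)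
    simp [round_eq_zero]

/-- For a prime `p ≥ 5`: `s(10p² − p, 12p − 1; (24p−3)/(24p−2), −1/2)` equals
`43/118` if `p = 5`, and equals `(p² + 12p − 181)/(12(12p − 1))` if `p ≥ 7`. -/
theorem stmt_13 (p : ℕ) (hp : p.Prime) (hp5 : 5 ≤ p) :
    (p = 5 →
      dedekindRademacher (10 * (p : ℤ) ^ 2 - p) (12 * (p : ℤ) - 1)
        ((24 * (p : ℝ) - 3) / (24 * (p : ℝ) - 2)) (-1 / 2) = 43 / 118) ∧
    (7 ≤ p →
      dedekindRademacher (10 * (p : ℤ) ^ 2 - p) (12 * (p : ℤ) - 1)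
        ((24 * (p : ℝ) - 3) / (24 * (p : ℝ) - 2)) (-1 / 2) =
      ((p : ℝ) ^ 2 + 12 * (p : ℝ) - 181) / (12 * (12 * (p : ℝ) - 1))) := by
  have coprime_six : p.Coprime 6 :=
    ((Nat.coprime_primes hp Nat.prime_two).2 (by lia)).mul_right
      ((Nat.coprime_primes hp Nat.prime_three).2 (by lia))
  exact stmt_13_general p coprime_six
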